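/- Let n ≥ 1, p > 1, δ < n − p. Then for every smooth compactly supported function f : ℝ^n → ℝ, ∫_{ℝ^n} |f(x)|^p |x|^{−p−δ} dx ≤ (p/(n−p−δ))^p ∫_{ℝ^n} |∇f(x)|^p |x|^{−δ} dx (the weighted Hardy inequality). -/

import Mathlib

open Real MeasureTheory

/-!
Differentiating `∫ w x • g (t • x) = t ^ (-(d + s)) • ∫ w x • g x` at `t = 1`, for a weight `w`
homogeneous of degree `s` on a `d`-dimensional space, gives the weak Euler identity
`∫ w x • Dg(x) x = -(d + s) • ∫ w x • g x`. Taking `g = ‖f‖ ^ p` and `K = p / (d + s)`, Young's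
inequality bounds `-K * Dg(x) x` by `(p - 1) * ‖f x‖ ^ p + K ^ p * ‖Df(x) x‖ ^ p`; integrating
against `w ≥ 0` yields `p * A ≤ (p - 1) * A + K ^ p * B` with `A = ∫ w x * ‖f x‖ ^ p` and
`B = ∫ w x * ‖Df(x) x‖ ^ p`, that is, `A ≤ K ^ p * B`. The choice `w x = ‖x‖ ^ (-p - δ)` and
`‖Df(x) x‖ ≤ ‖Df(x)‖ * ‖x‖` finish the proof.
-/

open Module Metric Set

section Calculus

variable {E F : Type*} [NormedAddCommGroup E] [NormedSpace ℝ E]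
  [NormedAddCommGroup F] [NormedSpace ℝ F] {g : E → F}

lemma continuous_fderiv_apply_self (hg : ContDiff ℝ 1 g) :
    Continuous fun x ↦ fderiv ℝ g x x :=
  (hg.continuous_fderiv one_ne_zero).clm_apply continuous_id

lemma hasCompactSupport_fderiv_apply_self (hg : HasCompactSupport g) :
    HasCompactSupport fun x ↦ fderiv ℝ g x x :=
  (hg.fderiv ℝ).mono fun x hx h ↦ hx (by simp [h])

lemma hasDerivAt_comp_smul {x : E} {t : ℝ} (hg : DifferentiableAt ℝ g (t • x)) :
    HasDerivAt (fun t : ℝ ↦ g (t • x)) (fderiv ℝ g (t • x) x) t := by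
  have hline : HasDerivAt (fun t : ℝ ↦ t • x) x t := by
    simpa using (hasDerivAt_id t).smul_const x
  exact hg.hasFDerivAt.comp_hasDerivAt t hline

lemma exists_norm_fderiv_smul_apply_le_indicator (hg : ContDiff ℝ 1 g)
    (hsupp : HasCompactSupport g) {ε : ℝ} (hε : 0 < ε) :
    ∃ C R : ℝ, ∀ t ≥ ε, ∀ x,
      ‖fderiv ℝ g (t • x) x‖ ≤ (closedBall 0 R).indicator (fun _ ↦ C) x := by
  have hsupp' := hasCompactSupport_fderiv_apply_self hsupp
  obtain ⟨C, hC⟩ :=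
    (continuous_fderiv_apply_self hg).bounded_above_of_compact_support hsupp'
  obtain ⟨R, hR⟩ := hsupp'.isCompact.isBounded.subset_closedBall (0 : E)
  refine ⟨ε⁻¹ * C, ε⁻¹ * R, fun t ht x ↦ ?_⟩
  have ht0 : 0 < t := hε.trans_le ht
  have heq : fderiv ℝ g (t • x) x = t⁻¹ • fderiv ℝ g (t • x) (t • x) := by
    rw [map_smul, inv_smul_smul₀ ht0.ne']
  rw [heq]
  by_cases hx : x ∈ closedBall 0 (ε⁻¹ * R)
  · rw [indicator_of_mem hx, norm_smul, norm_of_nonneg (inv_nonneg.2 ht0.le)]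
    gcongr
    exact hC _
  · rw [indicator_of_notMem hx, image_eq_zero_of_notMem_tsupport (f := fun y ↦ fderiv ℝ g y y),
      smul_zero, norm_zero]
    intro htx
    have hle : t * ‖x‖ ≤ R := by simpa [norm_smul, abs_of_pos ht0] using hR htx
    refine hx (mem_closedBall_zero_iff.2 ((le_inv_mul_iff₀ hε).2 ?_))
    exact (mul_le_mul_of_nonneg_right ht (norm_nonneg x)).trans hle

end Calculus

section NormRPow

variable {X F : Type*} [TopologicalSpace X] [NormedAddCommGroup F] {h : X → F} {p : ℝ}

lemma hasCompactSupport_norm_rpow (hp : p ≠ 0) (hsupp : HasCompactSupport h) :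
    HasCompactSupport fun x ↦ ‖h x‖ ^ p :=
  hsupp.comp_left (g := fun y : F ↦ ‖y‖ ^ p) (by simp [hp])

lemma integrable_mul_norm_rpow [T2Space X] [MeasurableSpace X] [OpensMeasurableSpace X]
    {μ : Measure X} {w : X → ℝ} (hw : LocallyIntegrable w μ) (hp : 0 < p) (hh : Continuous h)
    (hsupp : HasCompactSupport h) :
    Integrable (fun x ↦ w x * ‖h x‖ ^ p) μ :=
  hw.integrable_smul_right_of_hasCompactSupport (hh.norm.rpow_const fun _ ↦ .inr hp.le)
    (hasCompactSupport_norm_rpow hp.ne' hsupp)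

end NormRPow

lemma norm_rpow_mul_norm_apply_rpow_le {E F : Type*} [NormedAddCommGroup E] [NormedSpace ℝ E]
    [NormedAddCommGroup F] [NormedSpace ℝ F] (L : E →L[ℝ] F) (x : E) {p : ℝ} (hp : 0 < p) (s : ℝ) :
    ‖x‖ ^ s * ‖L x‖ ^ p ≤ ‖L‖ ^ p * ‖x‖ ^ (p + s) := by
  rcases eq_or_ne x 0 with rfl | hx
  · rw [map_zero, norm_zero, norm_zero, zero_rpow hp.ne', mul_zero]
    positivity
  · have hx0 : 0 < ‖x‖ := norm_pos_iff.2 hx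
    calc ‖x‖ ^ s * ‖L x‖ ^ p ≤ ‖x‖ ^ s * (‖L‖ * ‖x‖) ^ p := by
          gcongr
          exact L.le_opNorm x
      _ = ‖L‖ ^ p * ‖x‖ ^ (p + s) := by
          rw [mul_rpow (norm_nonneg L) hx0.le, rpow_add hx0]
          ring

section Young

lemma mul_rpow_sub_one_mul_le {p a b : ℝ} (hp : 1 < p) (ha : 0 ≤ a) (hb : 0 ≤ b) :
    p * a ^ (p - 1) * b ≤ (p - 1) * a ^ p + b ^ p := by
  have hp0 : p ≠ 0 := by linarith
  have hp1 : p - 1 ≠ 0 := by linarith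
  have young := young_inequality_of_nonneg (rpow_nonneg ha (p - 1)) hb
    (HolderConjugate.conjExponent hp).symm
  have hpow : (a ^ (p - 1)) ^ conjExponent p = a ^ p := by
    rw [← rpow_mul ha, conjExponent, mul_div_cancel₀ _ hp1]
  rw [hpow, conjExponent] at young
  calc p * a ^ (p - 1) * b = p * (a ^ (p - 1) * b) := mul_assoc ..
    _ ≤ p * (a ^ p / (p / (p - 1)) + b ^ p / p) := by gcongr
    _ = (p - 1) * a ^ p + b ^ p := by field_simp

variable {E F : Type*} [NormedAddCommGroup E] [NormedSpace ℝ E]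
  [NormedAddCommGroup F] [InnerProductSpace ℝ F] {f : E → F} {x : E} {p : ℝ}

lemma abs_fderiv_norm_rpow_apply_le (hf : DifferentiableAt ℝ f x) (hp : 1 < p) (v : E) :
    |fderiv ℝ (fun y ↦ ‖f y‖ ^ p) x v| ≤ p * ‖f x‖ ^ (p - 1) * ‖fderiv ℝ f x v‖ := by
  have chain : fderiv ℝ (fun y ↦ ‖f y‖ ^ p) x v =
      fderiv ℝ (fun y : F ↦ ‖y‖ ^ p) (f x) (fderiv ℝ f x v) := by
    rw [← ContinuousLinearMap.comp_apply, ← fderiv_comp x (differentiable_norm_rpow hp _) hf,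
      Function.comp_def]
  rw [chain, ← norm_fderiv_norm_id_rpow (f x) hp, ← norm_eq_abs]
  exact ContinuousLinearMap.le_opNorm _ _

lemma abs_fderiv_norm_rpow_apply_le_add (hf : DifferentiableAt ℝ f x) (hp : 1 < p) (v : E) :
    |fderiv ℝ (fun y ↦ ‖f y‖ ^ p) x v| ≤ (p - 1) * ‖f x‖ ^ p + ‖fderiv ℝ f x v‖ ^ p :=
  (abs_fderiv_norm_rpow_apply_le hf hp v).trans
    (mul_rpow_sub_one_mul_le hp (norm_nonneg _) (norm_nonneg _))

end Young

section FiniteDimensional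

variable {E F : Type*} [NormedAddCommGroup E] [NormedSpace ℝ E] [FiniteDimensional ℝ E]
  [MeasurableSpace E] [BorelSpace E] {μ : Measure E} [NormedAddCommGroup F]

section Euler

variable [NormedSpace ℝ F] {w : E → ℝ} {g : E → F}

lemma hasDerivAt_integral_smul_comp_smul (hw : LocallyIntegrable w μ) (hg : ContDiff ℝ 1 g)
    (hsupp : HasCompactSupport g) :
    HasDerivAt (fun t : ℝ ↦ ∫ x, w x • g (t • x) ∂μ) (∫ x, w x • fderiv ℝ g x x ∂μ) 1 := by
  obtain ⟨C, R, hbound⟩ := exists_norm_fderiv_smul_apply_le_indicator hg hsupp one_half_pos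
  have hbound_int :
      Integrable (fun x ↦ ‖w x‖ * (closedBall 0 R).indicator (fun _ ↦ C) x) μ := by
    have hball : IntegrableOn (fun x ↦ ‖w x‖ * C) (closedBall 0 R) μ :=
      (hw.integrableOn_isCompact (isCompact_closedBall 0 R)).norm.mul_const C
    exact ((integrable_indicator_iff measurableSet_closedBall).2 hball).congr
      (.of_forall fun x ↦ indicator_mul_right ..)
  have hderiv := hasDerivAt_integral_of_dominated_loc_of_deriv_le (μ := μ)
    (F := fun (t : ℝ) x ↦ w x • g (t • x)) (F' := fun t x ↦ w x • fderiv ℝ g (t • x) x)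
    (x₀ := 1) (s := Ioi (1 / 2)) (Ioi_mem_nhds (by norm_num))
    (.of_forall fun t ↦ hw.aestronglyMeasurable.smul
      (hg.continuous.comp (continuous_const_smul t)).aestronglyMeasurable)
    (by simpa using hw.integrable_smul_right_of_hasCompactSupport hg.continuous hsupp)
    (hw.aestronglyMeasurable.smul
      (by simpa using (continuous_fderiv_apply_self hg).aestronglyMeasurable))
    (.of_forall fun x t ht ↦ by
      rw [norm_smul]
      exact mul_le_mul_of_nonneg_left (hbound t (mem_Ioi.1 ht).le x) (norm_nonneg _))
    hbound_int
    (.of_forall fun x t _ ↦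
      (hasDerivAt_comp_smul (hg.differentiable one_ne_zero _)).const_smul (w x))
  simpa only [one_smul] using hderiv.2

variable [μ.IsAddHaarMeasure]

lemma integral_smul_comp_smul_of_homogeneous {s t : ℝ} (ht : 0 < t)
    (hhom : ∀ x, w (t • x) = t ^ s * w x) :
    ∫ x, w x • g (t • x) ∂μ = t ^ (-(finrank ℝ E + s)) • ∫ x, w x • g x ∂μ := by
  have hscale (x : E) : w x • g (t • x) = t ^ (-s) • (w (t • x) • g (t • x)) := by
    rw [smul_smul, hhom, ← mul_assoc, ← rpow_add ht, neg_add_cancel, rpow_zero, one_mul]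
  simp_rw [hscale]
  rw [integral_smul, Measure.integral_comp_smul μ (fun x ↦ w x • g x), smul_smul,
    abs_of_pos (by positivity), neg_add_rev, rpow_add ht, rpow_neg ht.le (finrank ℝ E),
    rpow_natCast]

lemma integral_smul_fderiv_apply_self_of_homogeneous {s : ℝ} (hw : LocallyIntegrable w μ)
    (hhom : ∀ t > 0, ∀ x, w (t • x) = t ^ s * w x) (hg : ContDiff ℝ 1 g)
    (hsupp : HasCompactSupport g) :
    ∫ x, w x • fderiv ℝ g x x ∂μ = -(finrank ℝ E + s) • ∫ x, w x • g x ∂μ := by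
  have hpow : HasDerivAt (fun t : ℝ ↦ t ^ (-(finrank ℝ E + s)) • ∫ x, w x • g x ∂μ)
      (-(finrank ℝ E + s) • ∫ x, w x • g x ∂μ) 1 := by
    simpa using (hasDerivAt_rpow_const (x := 1) (p := -(finrank ℝ E + s))
      (.inl one_ne_zero)).smul_const (∫ x, w x • g x ∂μ)
  refine (hasDerivAt_integral_smul_comp_smul hw hg hsupp).unique (hpow.congr_of_eventuallyEq ?_)
  filter_upwards [Ioi_mem_nhds zero_lt_one] with t ht
  exact integral_smul_comp_smul_of_homogeneous ht (hhom t ht)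

end Euler

section Hardy

variable [μ.IsAddHaarMeasure] [InnerProductSpace ℝ F] {f : E → F} {p : ℝ}

lemma locallyIntegrable_norm_rpow {s : ℝ} (hs : 0 < finrank ℝ E + s) :
    LocallyIntegrable (fun x : E ↦ ‖x‖ ^ s) μ := by
  cases subsingleton_or_nontrivial E
  · exact continuous_of_discreteTopology.locallyIntegrable
  · refine locallyIntegrable_of_norm_le_rpow (C := 1) (α := -s) finrank_pos (by linarith)
      (.of_forall fun x ↦ ?_) (measurable_norm.pow_const s).aestronglyMeasurable
    rw [norm_of_nonneg (by positivity), neg_neg, one_mul]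

theorem radial_hardy_of_homogeneous {w : E → ℝ} {s : ℝ} (hp : 1 < p)
    (hs : 0 < finrank ℝ E + s) (hw : LocallyIntegrable w μ) (hw0 : ∀ x, 0 ≤ w x)
    (hhom : ∀ t > 0, ∀ x, w (t • x) = t ^ s * w x)
    (hf : ContDiff ℝ 1 f) (hsupp : HasCompactSupport f) :
    ∫ x, w x * ‖f x‖ ^ p ∂μ ≤
      (p / (finrank ℝ E + s)) ^ p * ∫ x, w x * ‖fderiv ℝ f x x‖ ^ p ∂μ := by
  have hp0 : 0 < p := by linarith
  set K := p / (finrank ℝ E + s)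
  have hK0 : 0 ≤ K := by positivity
  have hg : ContDiff ℝ 1 fun x ↦ ‖f x‖ ^ p := hf.norm_rpow hp
  have hgsupp : HasCompactSupport fun x ↦ ‖f x‖ ^ p :=
    hasCompactSupport_norm_rpow hp0.ne' hsupp
  have euler := integral_smul_fderiv_apply_self_of_homogeneous hw hhom hg hgsupp
  have hint_deriv := hw.integrable_smul_right_of_hasCompactSupport
    (continuous_fderiv_apply_self hg) (hasCompactSupport_fderiv_apply_self hgsupp)
  have hint_f := integrable_mul_norm_rpow hw hp0 hf.continuous hsupp
  have hint_radial := integrable_mul_norm_rpow hw hp0 (continuous_fderiv_apply_self hf)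
    (hasCompactSupport_fderiv_apply_self hsupp)
  simp only [smul_eq_mul] at euler hint_deriv
  have pointwise (x : E) : -K * (w x * fderiv ℝ (fun y ↦ ‖f y‖ ^ p) x x) ≤
      (p - 1) * (w x * ‖f x‖ ^ p) + K ^ p * (w x * ‖fderiv ℝ f x x‖ ^ p) := by
    have young := (neg_le_abs _).trans <|
      abs_fderiv_norm_rpow_apply_le_add (hf.differentiable one_ne_zero x) hp (K • x)
    rw [map_smul, map_smul, norm_smul, norm_of_nonneg hK0, mul_rpow hK0 (norm_nonneg _),
      smul_eq_mul] at young
    linear_combination mul_le_mul_of_nonneg_left young (hw0 x)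
  have integrated := integral_mono (hint_deriv.const_mul (-K))
    ((hint_f.const_mul (p - 1)).add (hint_radial.const_mul (K ^ p))) pointwise
  simp only [Pi.add_apply] at integrated
  rw [integral_add (hint_f.const_mul _) (hint_radial.const_mul _), integral_const_mul,
    integral_const_mul, integral_const_mul, euler] at integrated
  have hKs : K * (finrank ℝ E + s) = p := div_mul_cancel₀ _ hs.ne'
  linear_combination integrated - (∫ x, w x * ‖f x‖ ^ p ∂μ) * hKs

theorem weighted_hardy_general {δ : ℝ} (hp : 1 < p) (hδ : δ < finrank ℝ E - p)
    (hf : ContDiff ℝ 1 f) (hsupp : HasCompactSupport f) :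
    ∫ x, ‖f x‖ ^ p * ‖x‖ ^ (-p - δ) ∂μ ≤
      (p / (finrank ℝ E - p - δ)) ^ p * ∫ x, ‖fderiv ℝ f x‖ ^ p * ‖x‖ ^ (-δ) ∂μ := by
  have hp0 : 0 < p := by linarith
  have hs : 0 < finrank ℝ E + (-p - δ) := by linarith
  have hw : LocallyIntegrable (fun x : E ↦ ‖x‖ ^ (-p - δ)) μ := locallyIntegrable_norm_rpow hs
  have hhom (t : ℝ) (ht : t > 0) (x : E) :
      ‖t • x‖ ^ (-p - δ) = t ^ (-p - δ) * ‖x‖ ^ (-p - δ) := by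
    rw [norm_smul, norm_of_nonneg ht.le, mul_rpow ht.le (norm_nonneg x)]
  have hint_radial := integrable_mul_norm_rpow hw hp0 (continuous_fderiv_apply_self hf)
    (hasCompactSupport_fderiv_apply_self hsupp)
  have hint_fderiv : Integrable (fun x ↦ ‖fderiv ℝ f x‖ ^ p * ‖x‖ ^ (-δ)) μ := by
    simpa only [mul_comm] using integrable_mul_norm_rpow
      (locallyIntegrable_norm_rpow (by linarith)) hp0 (hf.continuous_fderiv one_ne_zero)
      (hsupp.fderiv ℝ)
  have hpointwise (x : E) :
      ‖x‖ ^ (-p - δ) * ‖fderiv ℝ f x x‖ ^ p ≤ ‖fderiv ℝ f x‖ ^ p * ‖x‖ ^ (-δ) := by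
    have hexp : p + (-p - δ) = -δ := by ring
    simpa only [hexp] using norm_rpow_mul_norm_apply_rpow_le (fderiv ℝ f x) x hp0 (-p - δ)
  have hdim : (finrank ℝ E : ℝ) - p - δ = finrank ℝ E + (-p - δ) := by ring
  rw [hdim]
  calc ∫ x, ‖f x‖ ^ p * ‖x‖ ^ (-p - δ) ∂μ
      = ∫ x, ‖x‖ ^ (-p - δ) * ‖f x‖ ^ p ∂μ := by simp only [mul_comm]
    _ ≤ (p / (finrank ℝ E + (-p - δ))) ^ p *
          ∫ x, ‖x‖ ^ (-p - δ) * ‖fderiv ℝ f x x‖ ^ p ∂μ :=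
        radial_hardy_of_homogeneous hp hs hw (fun x ↦ by positivity) hhom hf hsupp
    _ ≤ (p / (finrank ℝ E + (-p - δ))) ^ p *
          ∫ x, ‖fderiv ℝ f x‖ ^ p * ‖x‖ ^ (-δ) ∂μ :=
        mul_le_mul_of_nonneg_left (integral_mono hint_radial hint_fderiv hpointwise) (by positivity)

end Hardy

end FiniteDimensional

/-- Weighted Hardy inequality on ℝⁿ with sharp constant `(p/(n−p−δ))^p`. -/
theorem weighted_hardy
    (n : ℕ) (hn : 1 ≤ n) (p δ : ℝ) (hp : 1 < p) (hδ : δ < n - p)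
    (f : EuclideanSpace ℝ (Fin n) → ℝ) (hf : ContDiff ℝ (⊤ : ℕ∞) f)
    (hsupp : HasCompactSupport f) :
    ∫ x : EuclideanSpace ℝ (Fin n), |f x| ^ p * ‖x‖ ^ (-p - δ) ≤
      (p / (n - p - δ)) ^ p *
        ∫ x : EuclideanSpace ℝ (Fin n), ‖gradient f x‖ ^ p * ‖x‖ ^ (-δ) := by
  simpa [← toDual_gradient] using weighted_hardy_general (μ := volume) hp
    (by simpa using hδ) (hf.of_le (by exact_mod_cast le_top)) hsupp
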